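/- arXiv:2108.10219 — 2 statements merged into one kernel-verified Lean document; each statement's English description precedes it below -/
import Mathlib

section
/- Let x̄ ∈ ℝ, σ > 0 and t > 0, and let P_t : ℝ → ℝ be defined by P_t(x) = t·sgn(x) if |x| > t and P_t(x) = x if |x| ≤ t. Set a₁ = (t + x̄)/(√2·σ) and a₂ = (t − x̄)/(√2·σ). Then (1/(√(2π)·σ)) ∫_{−∞}^{∞} x·P_t(x) · exp(−(x − x̄)²/(2σ²)) dx = ((t/2)·√(2/π)·σ + √(2/π)·σ·x̄ − (σ²/√π)·a₁)·exp(−a₁²) + ((t/2)·√(2/π)·σ − √(2/π)·σ·x̄ − (σ²/√π)·a₂)·exp(−a₂²) + (1/2)(σ² + x̄² + t·x̄)·erf(a₁) + (1/2)(σ² + x̄² − t·x̄)·erf(a₂), where erf(z) = (2/√π) ∫₀^z exp(−u²) du. -/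
open MeasureTheory

/-- The error function `erf(z) = (2/√π) ∫₀^z exp(−u²) du`. -/
noncomputable def erf (z : ℝ) : ℝ :=
  (2 / Real.sqrt Real.pi) * ∫ u in (0:ℝ)..z, Real.exp (-u ^ 2)

/-- The clipping function `P_t(x) = t·sgn(x)` if `|x| > t`, `P_t(x) = x` if `|x| ≤ t`. -/
noncomputable def clip (t x : ℝ) : ℝ := if |x| ≤ t then x else t * Real.sign x

open Set Filter Topology

/-- unnormalised error function -/
noncomputable def gE (z : ℝ) : ℝ := ∫ u in (0:ℝ)..z, Real.exp (-u ^ 2)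

lemma gE_deriv (z : ℝ) : HasDerivAt gE (Real.exp (-z ^ 2)) z := by
  have hc : Continuous (fun u : ℝ => Real.exp (-u ^ 2)) := by fun_prop
  exact intervalIntegral.integral_hasDerivAt_right (hc.intervalIntegrable _ _)
    (hc.stronglyMeasurableAtFilter _ _) hc.continuousAt

lemma gE_neg (z : ℝ) : gE (-z) = -gE z := by
  have h := intervalIntegral.integral_comp_neg (a := 0) (b := z)
    (fun u : ℝ => Real.exp (-u ^ 2))
  simp only [neg_sq, neg_zero] at h
  unfold gE
  rw [h, intervalIntegral.integral_symm]

lemma int_e : Integrable (fun u : ℝ => Real.exp (-u ^ 2)) := by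
  simpa using integrable_exp_neg_mul_sq (b := 1) one_pos

lemma int_ue : Integrable (fun u : ℝ => u * Real.exp (-u ^ 2)) := by
  simpa using integrable_mul_exp_neg_mul_sq (b := 1) one_pos

lemma gE_top : Tendsto gE atTop (𝓝 (Real.sqrt Real.pi / 2)) := by
  have h := integral_gaussian_Ioi 1
  simp only [neg_mul, one_mul, div_one] at h
  rw [← h]
  exact intervalIntegral_tendsto_integral_Ioi 0 int_e.integrableOn tendsto_id

lemma gE_bot : Tendsto gE atBot (𝓝 (-(Real.sqrt Real.pi / 2))) := by
  have h := (gE_top.comp tendsto_neg_atBot_atTop).neg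
  refine h.congr fun x => ?_
  simp [gE_neg]

lemma e_top : Tendsto (fun u : ℝ => Real.exp (-u ^ 2)) atTop (𝓝 0) :=
  Real.tendsto_exp_atBot.comp (tendsto_neg_atTop_atBot.comp (tendsto_pow_atTop two_ne_zero))

lemma e_bot : Tendsto (fun u : ℝ => Real.exp (-u ^ 2)) atBot (𝓝 0) := by
  refine (e_top.comp tendsto_neg_atBot_atTop).congr fun x => ?_
  simp

lemma e_deriv (u : ℝ) :
    HasDerivAt (fun u : ℝ => Real.exp (-u ^ 2)) (-2 * u * Real.exp (-u ^ 2)) u := by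
  have h := ((hasDerivAt_pow 2 u).neg).exp
  refine h.congr_deriv ?_
  simp
  ring

lemma lin_deriv (m s c u : ℝ) :
    HasDerivAt (fun u => c * (m * gE u - s / 2 * Real.exp (-u ^ 2)))
      ((m + s * u) * c * Real.exp (-u ^ 2)) u := by
  refine ((((gE_deriv u).const_mul m).sub ((e_deriv u).const_mul (s / 2))).const_mul c).congr_deriv ?_
  ring

lemma lin_int (m s c : ℝ) : Integrable (fun u => (m + s * u) * c * Real.exp (-u ^ 2)) := by
  refine ((int_e.const_mul (m * c)).add (int_ue.const_mul (s * c))).congr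
    (Eventually.of_forall fun u => ?_)
  simp only [Pi.add_apply]
  ring

lemma tail_top (m s c a : ℝ) : ∫ u in Ioi a, (m + s * u) * c * Real.exp (-u ^ 2) =
    c * (m * (Real.sqrt Real.pi / 2) - s / 2 * 0) - c * (m * gE a - s / 2 * Real.exp (-a ^ 2)) :=
  integral_Ioi_of_hasDerivAt_of_tendsto' (fun x _ => lin_deriv m s c x)
    (lin_int m s c).integrableOn
    (((gE_top.const_mul m).sub (e_top.const_mul (s / 2))).const_mul c)

lemma tail_bot (m s c a : ℝ) : ∫ u in Iic a, (m + s * u) * c * Real.exp (-u ^ 2) =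
    c * (m * gE a - s / 2 * Real.exp (-a ^ 2))
      - c * (m * (-(Real.sqrt Real.pi / 2)) - s / 2 * 0) :=
  integral_Iic_of_hasDerivAt_of_tendsto' (fun x _ => lin_deriv m s c x)
    (lin_int m s c).integrableOn
    (((gE_bot.const_mul m).sub (e_bot.const_mul (s / 2))).const_mul c)

lemma quad_deriv (m s u : ℝ) :
    HasDerivAt (fun u => (m ^ 2 + s ^ 2 / 2) * gE u
        - (m * s + s ^ 2 / 2 * u) * Real.exp (-u ^ 2))
      ((m + s * u) * (m + s * u) * Real.exp (-u ^ 2)) u := by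
  have h1 : HasDerivAt (fun u : ℝ => m * s + s ^ 2 / 2 * u) (s ^ 2 / 2) u := by
    simpa using ((hasDerivAt_id u).const_mul (s ^ 2 / 2)).const_add (m * s)
  refine (((gE_deriv u).const_mul (m ^ 2 + s ^ 2 / 2)).sub (h1.mul (e_deriv u))).congr_deriv ?_
  ring

lemma quad_cont (m s : ℝ) :
    Continuous (fun u : ℝ => (m + s * u) * (m + s * u) * Real.exp (-u ^ 2)) := by fun_prop

lemma middle (m s a b : ℝ) :
    ∫ u in a..b, (m + s * u) * (m + s * u) * Real.exp (-u ^ 2) =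
    ((m ^ 2 + s ^ 2 / 2) * gE b - (m * s + s ^ 2 / 2 * b) * Real.exp (-b ^ 2))
    - ((m ^ 2 + s ^ 2 / 2) * gE a - (m * s + s ^ 2 / 2 * a) * Real.exp (-a ^ 2)) :=
  intervalIntegral.integral_eq_sub_of_hasDerivAt (fun x _ => quad_deriv m s x)
    ((quad_cont m s).intervalIntegrable _ _)

lemma clip_hi {t x : ℝ} (ht : 0 < t) (h : t < x) : clip t x = t := by
  have hx : 0 < x := ht.trans h
  rw [clip, if_neg (by rw [abs_of_pos hx]; linarith), Real.sign_of_pos hx, mul_one]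

lemma clip_lo {t x : ℝ} (ht : 0 < t) (h : x ≤ -t) : clip t x = -t := by
  have hx : x < 0 := by linarith
  rw [clip]
  split_ifs with h1
  · rw [abs_of_neg hx] at h1
    linarith
  · rw [Real.sign_of_neg hx]
    ring

lemma std_integral (m s t a b : ℝ) (ht : 0 < t) (hs : 0 < s) (ha : m + s * a = -t)
    (hb : m + s * b = t) :
    ∫ u : ℝ, (m + s * u) * clip t (m + s * u) * Real.exp (-u ^ 2) =
    (∫ u in Iic a, (m + s * u) * (-t) * Real.exp (-u ^ 2))
    + ((∫ u in a..b, (m + s * u) * (m + s * u) * Real.exp (-u ^ 2))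
    + ∫ u in Ioi b, (m + s * u) * t * Real.exp (-u ^ 2)) := by
  have hab : a ≤ b := by
    by_contra! h
    nlinarith [mul_lt_mul_of_pos_left h hs]
  have e1 : EqOn (fun u : ℝ => (m + s * u) * (-t) * Real.exp (-u ^ 2))
      (fun u => (m + s * u) * clip t (m + s * u) * Real.exp (-u ^ 2)) (Iic a) := by
    intro u hu
    have := mul_le_mul_of_nonneg_left (mem_Iic.1 hu) hs.le
    simp only [clip_lo ht (show m + s * u ≤ -t by linarith)]
  have e3 : EqOn (fun u : ℝ => (m + s * u) * t * Real.exp (-u ^ 2))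
      (fun u => (m + s * u) * clip t (m + s * u) * Real.exp (-u ^ 2)) (Ioi b) := by
    intro u hu
    have := mul_lt_mul_of_pos_left (mem_Ioi.1 hu) hs
    simp only [clip_hi ht (show t < m + s * u by linarith)]
  have e2 : EqOn (fun u : ℝ => (m + s * u) * (m + s * u) * Real.exp (-u ^ 2))
      (fun u => (m + s * u) * clip t (m + s * u) * Real.exp (-u ^ 2)) (Ioc a b) := by
    intro u hu
    have h1 := mul_lt_mul_of_pos_left hu.1 hs
    have h2 := mul_le_mul_of_nonneg_left hu.2 hs.le
    have : clip t (m + s * u) = m + s * u := by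
      rw [clip, if_pos (abs_le.2 ⟨by linarith, by linarith⟩)]
    simp only [this]
  have i1 := (lin_int m s (-t)).integrableOn.congr_fun e1 measurableSet_Iic
  have i3 := (lin_int m s t).integrableOn.congr_fun e3 measurableSet_Ioi
  have i2 := ((quad_cont m s).integrableOn_Ioc (μ := volume)).congr_fun e2 measurableSet_Ioc
  rw [intervalIntegral.integral_of_le hab, setIntegral_congr_fun measurableSet_Iic e1,
    setIntegral_congr_fun measurableSet_Ioi e3, setIntegral_congr_fun measurableSet_Ioc e2,
    ← setIntegral_union (by
        rw [Set.disjoint_left]; intro x h1 h2; exact absurd h1.2 (not_le.2 h2))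
      measurableSet_Ioi i2 i3, Ioc_union_Ioi_eq_Ioi hab,
    ← setIntegral_union (Iic_disjoint_Ioi le_rfl) measurableSet_Ioi i1
      (by rw [← Ioc_union_Ioi_eq_Ioi hab]; exact i2.union i3), Iic_union_Ioi, setIntegral_univ]

/-- the Gaussian mean of `x·P_t(x)`, with `a₁ = (t + x̄)/(√2σ)`
and `a₂ = (t − x̄)/(√2σ)`. -/
theorem gaussian_mean_x_clip (xbar σ t : ℝ) (hσ : 0 < σ) (ht : 0 < t)
    (a₁ a₂ : ℝ) (ha₁ : a₁ = (t + xbar) / (Real.sqrt 2 * σ))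
    (ha₂ : a₂ = (t - xbar) / (Real.sqrt 2 * σ)) :
    (1 / (Real.sqrt (2 * Real.pi) * σ)) *
        ∫ x : ℝ, x * clip t x * Real.exp (-(x - xbar) ^ 2 / (2 * σ ^ 2)) =
      ((t / 2) * Real.sqrt (2 / Real.pi) * σ + Real.sqrt (2 / Real.pi) * σ * xbar -
            (σ ^ 2 / Real.sqrt Real.pi) * a₁) * Real.exp (-a₁ ^ 2) +
        ((t / 2) * Real.sqrt (2 / Real.pi) * σ - Real.sqrt (2 / Real.pi) * σ * xbar -
            (σ ^ 2 / Real.sqrt Real.pi) * a₂) * Real.exp (-a₂ ^ 2) +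
        (1 / 2) * (σ ^ 2 + xbar ^ 2 + t * xbar) * erf a₁ +
        (1 / 2) * (σ ^ 2 + xbar ^ 2 - t * xbar) * erf a₂ := by
  have h2 : 0 < Real.sqrt 2 := by positivity
  have hp : 0 < Real.sqrt Real.pi := Real.sqrt_pos.2 Real.pi_pos
  have h22 : Real.sqrt 2 ^ 2 = 2 := Real.sq_sqrt (by norm_num)
  obtain ⟨s, hs⟩ : ∃ s, s = Real.sqrt 2 * σ := ⟨_, rfl⟩
  have hs0 : 0 < s := by rw [hs]; positivity
  have hs2 : s ^ 2 = 2 * σ ^ 2 := by rw [hs, mul_pow, h22]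
  have hsub : ∫ x : ℝ, x * clip t x * Real.exp (-(x - xbar) ^ 2 / (2 * σ ^ 2)) =
      s * ∫ u : ℝ, (xbar + s * u) * clip t (xbar + s * u) * Real.exp (-u ^ 2) := by
    have k1 := integral_add_left_eq_self (μ := volume)
      (fun x : ℝ => x * clip t x * Real.exp (-(x - xbar) ^ 2 / (2 * σ ^ 2))) xbar
    have k2 := Measure.integral_comp_mul_left (fun y : ℝ => (xbar + y) * clip t (xbar + y) *
      Real.exp (-(xbar + y - xbar) ^ 2 / (2 * σ ^ 2))) s
    rw [k1, abs_of_pos (inv_pos.2 hs0), smul_eq_mul] at k2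
    have k3 : ∀ u : ℝ, -(xbar + s * u - xbar) ^ 2 / (2 * σ ^ 2) = -u ^ 2 := by
      intro u
      rw [← hs2]
      field_simp
      ring
    simp only [k3] at k2
    rw [k2, mul_inv_cancel_left₀ hs0.ne']
  have ha : xbar + s * (-a₁) = -t := by
    rw [ha₁, ← hs]
    field_simp
    ring
  have hb : xbar + s * a₂ = t := by
    rw [ha₂, ← hs]
    field_simp
    ring
  have he : ∀ z, erf z = 2 / Real.sqrt Real.pi * gE z := fun z => rfl
  rw [hsub, std_integral xbar s t (-a₁) a₂ ht hs0 ha hb, tail_bot, tail_top, middle, gE_neg, neg_sq,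
    he, he, Real.sqrt_mul (by norm_num), Real.sqrt_div (by norm_num), hs2, hs]
  clear ha hb ha₁ ha₂ hsub hs hs2
  field_simp
  ring
end

section
/- Let x̄ ∈ ℝ, σ > 0 and t > 0, and let P_t : ℝ → ℝ be defined by P_t(x) = t·sgn(x) if |x| > t and P_t(x) = x if |x| ≤ t. Set a₁ = (t + x̄)/(√2·σ) and a₂ = (t − x̄)/(√2·σ). Then (1/(√(2π)·σ)) ∫_{−∞}^{∞} P_t(x)² · exp(−(x − x̄)²/(2σ²)) dx = (√(2/π)·σ·x̄ − (σ²/√π)·a₁)·exp(−a₁²) − (√(2/π)·σ·x̄ + (σ²/√π)·a₂)·exp(−a₂²) + (1/2)(σ² + x̄² − t²)·(erf(a₁) + erf(a₂)) + t², where erf(z) = (2/√π) ∫₀^z exp(−u²) du. -/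
open MeasureTheory

lemma erfInt_neg (z : ℝ) :
    (∫ u in (0:ℝ)..(-z), Real.exp (-u ^ 2)) = -∫ u in (0:ℝ)..z, Real.exp (-u ^ 2) := by
  have h := intervalIntegral.integral_comp_neg (a := 0) (b := z)
    (fun u : ℝ => Real.exp (-u ^ 2))
  simp only [neg_sq, neg_zero] at h
  rw [h, intervalIntegral.integral_symm]

lemma erfInt_deriv (z : ℝ) :
    HasDerivAt (fun z : ℝ => ∫ u in (0:ℝ)..z, Real.exp (-u ^ 2)) (Real.exp (-z ^ 2)) z := by
  have hc : Continuous (fun u : ℝ => Real.exp (-u ^ 2)) := by fun_prop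
  exact intervalIntegral.integral_hasDerivAt_right (hc.intervalIntegrable _ _)
    (hc.stronglyMeasurableAtFilter _ _) hc.continuousAt

lemma clip_sq_eq (t x : ℝ) (ht : 0 < t) :
    clip t x ^ 2 = t ^ 2 + (Set.Ioc (-t) t).indicator (fun x => x ^ 2 - t ^ 2) x := by
  unfold clip
  by_cases h : x ∈ Set.Ioc (-t) t
  · rw [Set.indicator_of_mem h, if_pos (abs_le.2 ⟨h.1.le, h.2⟩)]; ring
  · rw [Set.indicator_of_notMem h]
    split_ifs with h1
    · have h2 := abs_le.1 h1
      have : x = -t := by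
        by_contra h3
        exact h ⟨lt_of_le_of_ne h2.1 (Ne.symm h3), h2.2⟩
      rw [this]; ring
    · have hx : x ≠ 0 := by
        rintro rfl
        simp at h1; linarith
      rcases Real.sign_apply_eq_of_ne_zero x hx with h3 | h3 <;> rw [h3] <;> ring

/-- the Gaussian mean of `P_t(x)²`, with `a₁ = (t + x̄)/(√2σ)`
and `a₂ = (t − x̄)/(√2σ)`. -/
theorem gaussian_mean_clip_sq (xbar σ t : ℝ) (hσ : 0 < σ) (ht : 0 < t)
    (a₁ a₂ : ℝ) (ha₁ : a₁ = (t + xbar) / (Real.sqrt 2 * σ))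
    (ha₂ : a₂ = (t - xbar) / (Real.sqrt 2 * σ)) :
    (1 / (Real.sqrt (2 * Real.pi) * σ)) *
        ∫ x : ℝ, clip t x ^ 2 * Real.exp (-(x - xbar) ^ 2 / (2 * σ ^ 2)) =
      (Real.sqrt (2 / Real.pi) * σ * xbar - (σ ^ 2 / Real.sqrt Real.pi) * a₁) *
          Real.exp (-a₁ ^ 2) -
        (Real.sqrt (2 / Real.pi) * σ * xbar + (σ ^ 2 / Real.sqrt Real.pi) * a₂) *
          Real.exp (-a₂ ^ 2) +
        (1 / 2) * (σ ^ 2 + xbar ^ 2 - t ^ 2) * (erf a₁ + erf a₂) + t ^ 2 := by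
  have hs0 : (0:ℝ) < Real.sqrt 2 := by positivity
  have hp0 : (0:ℝ) < Real.sqrt Real.pi := Real.sqrt_pos.2 Real.pi_pos
  have e1 : Real.sqrt (2 * Real.pi) = Real.sqrt 2 * Real.sqrt Real.pi :=
    Real.sqrt_mul (by norm_num) _
  have e2 : Real.sqrt (2 / Real.pi) = Real.sqrt 2 / Real.sqrt Real.pi :=
    Real.sqrt_div (by norm_num) _
  have hs2 : Real.sqrt 2 ^ 2 = 2 := Real.sq_sqrt (by norm_num)
  have hG0 : ∀ x : ℝ, -(x - xbar) ^ 2 / (2 * σ ^ 2) = -(1 / (2 * σ ^ 2)) * (x - xbar) ^ 2 := by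
    intro x; ring
  have hGi : Integrable (fun x : ℝ => Real.exp (-(x - xbar) ^ 2 / (2 * σ ^ 2))) := by
    simp only [hG0]
    exact (integrable_exp_neg_mul_sq (b := 1 / (2 * σ ^ 2)) (by positivity)).comp_sub_right xbar
  have hGv : ∫ x : ℝ, Real.exp (-(x - xbar) ^ 2 / (2 * σ ^ 2))
      = Real.sqrt 2 * Real.sqrt Real.pi * σ := by
    simp only [hG0]
    rw [integral_sub_right_eq_self (fun x : ℝ => Real.exp (-(1 / (2 * σ ^ 2)) * x ^ 2)) xbar,
      integral_gaussian]
    have : Real.pi / (1 / (2 * σ ^ 2)) = (2 * Real.pi) * σ ^ 2 := by field_simp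
    rw [this, Real.sqrt_mul (by positivity), Real.sqrt_sq hσ.le, e1]
  have hc : Continuous (fun x : ℝ => (x ^ 2 - t ^ 2) *
      Real.exp (-(x - xbar) ^ 2 / (2 * σ ^ 2))) := by fun_prop
  have hsplit : (∫ x : ℝ, clip t x ^ 2 * Real.exp (-(x - xbar) ^ 2 / (2 * σ ^ 2)))
      = t ^ 2 * (Real.sqrt 2 * Real.sqrt Real.pi * σ) +
        ∫ x in (-t)..t, (x ^ 2 - t ^ 2) * Real.exp (-(x - xbar) ^ 2 / (2 * σ ^ 2)) := by
    rw [← hGv, ← integral_const_mul, intervalIntegral.integral_of_le (by linarith),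
      ← integral_indicator measurableSet_Ioc, ← integral_add (hGi.const_mul _)]
    · congr 1
      ext x
      rw [clip_sq_eq t x ht]
      by_cases h : x ∈ Set.Ioc (-t) t
      · rw [Set.indicator_of_mem h, Set.indicator_of_mem h]; ring
      · rw [Set.indicator_of_notMem h, Set.indicator_of_notMem h]; ring
    · exact (integrable_indicator_iff measurableSet_Ioc).2
        ((hc.integrableOn_Icc).mono_set Set.Ioc_subset_Icc_self)
  have hF : ∀ x : ℝ, HasDerivAt (fun x : ℝ =>
      (xbar ^ 2 - t ^ 2 + σ ^ 2) * (Real.sqrt 2 * σ) *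
        (∫ u in (0:ℝ)..((x - xbar) / (Real.sqrt 2 * σ)), Real.exp (-u ^ 2)) -
      (Real.sqrt 2 * σ) * (Real.sqrt 2 * σ * xbar + σ ^ 2 * ((x - xbar) / (Real.sqrt 2 * σ))) *
        Real.exp (-((x - xbar) / (Real.sqrt 2 * σ)) ^ 2))
      ((x ^ 2 - t ^ 2) * Real.exp (-(x - xbar) ^ 2 / (2 * σ ^ 2))) x := by
    intro x
    have hu : HasDerivAt (fun x : ℝ => (x - xbar) / (Real.sqrt 2 * σ))
        (1 / (Real.sqrt 2 * σ)) x := ((hasDerivAt_id x).sub_const xbar).div_const _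
    have hE := HasDerivAt.comp x (erfInt_deriv ((x - xbar) / (Real.sqrt 2 * σ))) hu
    have hX := ((hu.pow 2).neg).exp
    have hL := ((hu.const_mul (σ ^ 2)).const_add (Real.sqrt 2 * σ * xbar)).const_mul
      (Real.sqrt 2 * σ)
    have hall := (hE.const_mul ((xbar ^ 2 - t ^ 2 + σ ^ 2) * (Real.sqrt 2 * σ))).sub (hL.mul hX)
    have hexp : -(x - xbar) ^ 2 / (2 * σ ^ 2) = -((x - xbar) / (Real.sqrt 2 * σ)) ^ 2 := by
      rw [div_pow, mul_pow, hs2]; ring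
    rw [hexp]
    refine hall.congr_deriv ?_
    simp only [Pi.neg_apply, Pi.pow_apply]
    obtain ⟨u, hu'⟩ : ∃ u, u = (x - xbar) / (Real.sqrt 2 * σ) := ⟨_, rfl⟩
    have hx : x = xbar + Real.sqrt 2 * σ * u := by rw [hu']; field_simp; ring
    rw [← hu', hx]
    generalize Real.exp (-u ^ 2) = e
    field_simp
    ring_nf
    simp only [hs2]
    ring
  have hI := intervalIntegral.integral_eq_sub_of_hasDerivAt (a := -t) (b := t)
    (fun x _ => hF x) (hc.intervalIntegrable _ _)
  have hb1 : (-t - xbar) / (Real.sqrt 2 * σ) = -a₁ := by rw [ha₁]; ring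
  rw [hb1, ← ha₂, erfInt_neg, neg_sq] at hI
  rw [hsplit, hI, e1, e2]
  unfold erf
  generalize (∫ u in (0:ℝ)..a₁, Real.exp (-u ^ 2)) = E1
  generalize (∫ u in (0:ℝ)..a₂, Real.exp (-u ^ 2)) = E2
  generalize Real.exp (-a₁ ^ 2) = x1
  generalize Real.exp (-a₂ ^ 2) = x2
  clear hb1 hI hF hsplit hc hGv hGi hG0 e1 e2 ha₁ ha₂
  field_simp
  ring
end
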